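/- Let n ≥ 2 be an integer and s ∈ ℂ such that 1 + 2s is not a nonpositive integer. The function h(z) := (1−z)^{1/2 − n/2 − s} · ₂F₁(n/2 + s, s, 1 + 2s; 1/(1−z)), where (1−z)^{w} := exp(w·log(1−z)) with the real logarithm, satisfies the radial hypergeometric equation E(n, s²) on the interval (−∞, 0). -/

import Mathlib

open Real Set Complex

/-- A complex-valued function `w` of a real variable satisfies the radial hypergeometric
equation `E(n, τ)` on the set `I`:
`z(1−z)w'' + (n/2 − nz)w' − (((n−1)/4)(n−1+1/(1−z)) − τ)w = 0` on `I`. -/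
def SatisfiesRadialHGC (n : ℕ) (τ : ℂ) (w : ℝ → ℂ) (I : Set ℝ) : Prop :=
  ∀ z ∈ I, (z : ℂ) * (1 - z) * deriv (deriv w) z + ((n : ℂ) / 2 - n * z) * deriv w z
    - (((n : ℂ) - 1) / 4 * ((n : ℂ) - 1 + 1 / (1 - (z : ℂ))) - τ) * w z = 0

/-!
The factor `(1 - z)^{1/2}` removes the term in `1/(1 - z)`: if `w = (1 - z)^{1/2} u`, then `w`
solves `E(ν, s²)` exactly when `u` solves Gauss's equation with parameters
`(ν/2 + s, ν/2 - s, ν/2)`. Kummer's solution of the latter at `z = ∞` is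
`(1 - z)^{-ν/2 - s} ₂F₁(ν/2 + s, s; 1 + 2s; 1/(1 - z))`. Both substitutions are identities between
differential operators in a complex variable, so what remains is Gauss's equation for the series
`₂F₁` itself, which is the recurrence of its coefficients.
-/

open scoped Topology ENNReal

section PowerSeries

lemma hasSum_mul_pow_of_hasSum_succ {R : Type*} [CommRing R] [TopologicalSpace R]
    [IsTopologicalRing R] {c : ℕ → R} {x S : R} (h0 : c 0 = 0)
    (h : HasSum (fun n => c (n + 1) * x ^ n) S) : HasSum (fun n => c n * x ^ n) (x * S) := by
  refine (hasSum_nat_add_iff' 1).1 ?_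
  simp only [Finset.sum_range_one, h0, zero_mul, sub_zero]
  exact (h.mul_left x).congr_fun fun n => by ring

variable {𝕜 : Type*} [NontriviallyNormedField 𝕜] {f : 𝕜 → 𝕜} {c : ℕ → 𝕜} {x : 𝕜} {r : ℝ≥0∞}

lemma hasSum_ofScalars (h : HasFPowerSeriesOnBall f (.ofScalars 𝕜 c) 0 r) (hx : ‖x‖ₑ < r) :
    HasSum (fun n => c n * x ^ n) (f x) := by
  simpa [FormalMultilinearSeries.ofScalars_apply_eq, mul_comm] using
    h.hasSum (mem_eball_zero_iff.2 hx)

variable [CompleteSpace 𝕜]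

lemma hasFPowerSeriesOnBall_deriv_ofScalars (h : HasFPowerSeriesOnBall f (.ofScalars 𝕜 c) x r) :
    HasFPowerSeriesOnBall (deriv f) (.ofScalars 𝕜 fun n => ((n : 𝕜) + 1) * c (n + 1)) x r := by
  have hseries : (.ofScalars 𝕜 fun n => ((n : 𝕜) + 1) * c (n + 1) : FormalMultilinearSeries 𝕜 𝕜 𝕜) =
      (ContinuousLinearMap.apply 𝕜 𝕜 (1 : 𝕜)).compFormalMultilinearSeries
        (FormalMultilinearSeries.ofScalars 𝕜 c).derivSeries := by
    refine funext fun n => ContinuousMultilinearMap.ext_ring ?_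
    change (FormalMultilinearSeries.ofScalars 𝕜 _).coeff n =
      (FormalMultilinearSeries.ofScalars 𝕜 c).derivSeries.coeff n 1
    simp only [FormalMultilinearSeries.coeff_ofScalars,
      FormalMultilinearSeries.derivSeries_coeff_one, nsmul_eq_mul, Nat.cast_add, Nat.cast_one]
  exact hseries ▸ (ContinuousLinearMap.apply 𝕜 𝕜 (1 : 𝕜)).comp_hasFPowerSeriesOnBall h.fderiv

lemma hasSum_mul_deriv_ofScalars (h : HasFPowerSeriesOnBall f (.ofScalars 𝕜 c) 0 r)
    (hx : ‖x‖ₑ < r) : HasSum (fun n : ℕ => n * c n * x ^ n) (x * deriv f x) := by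
  apply hasSum_mul_pow_of_hasSum_succ (c := fun n : ℕ => n * c n) (by simp)
  simpa using hasSum_ofScalars (hasFPowerSeriesOnBall_deriv_ofScalars h) hx

end PowerSeries

/-- The Gauss hypergeometric operator `x(1 − x) d²/dx² + (c − (a + b + 1)x) d/dx − ab`,
whose kernel consists of the solutions of Gauss's equation. -/
noncomputable def hypergeometricOp {𝕜 : Type*} [NontriviallyNormedField 𝕜] (a b c : 𝕜)
    (f : 𝕜 → 𝕜) (x : 𝕜) : 𝕜 :=
  x * (1 - x) * iteratedDeriv 2 f x + (c - (a + b + 1) * x) * deriv f x - a * b * f x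

section GaussHypergeometric

variable {𝕜 : Type*} [RCLike 𝕜] (a b : 𝕜) {c : 𝕜}

lemma ordinaryHypergeometricCoefficient_succ (hc : ∀ m : ℕ, c ≠ -m) (n : ℕ) :
    (c + n) * ((n + 1) * ordinaryHypergeometricCoefficient a b c (n + 1)) =
      (a + n) * (b + n) * ordinaryHypergeometricCoefficient a b c n := by
  have hcn : c + n ≠ 0 := fun h => hc n (eq_neg_of_add_eq_zero_left h)
  have hn : (n : 𝕜) + 1 ≠ 0 := Nat.cast_add_one_ne_zero n
  simp only [ordinaryHypergeometricCoefficient, ascPochhammer_succ_eval, Nat.factorial_succ,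
    Nat.cast_mul, Nat.cast_add, Nat.cast_one, mul_inv]
  field_simp

lemma one_le_radius_ordinaryHypergeometricSeries (c : 𝕜) :
    1 ≤ (ordinaryHypergeometricSeries 𝕜 a b c).radius := by
  by_cases! h : ∀ k : ℕ, (k : 𝕜) ≠ -a ∧ (k : 𝕜) ≠ -b ∧ (k : 𝕜) ≠ -c
  · exact (ordinaryHypergeometricSeries_radius_eq_one 𝕜 a b c h).ge
  · obtain ⟨k, hk⟩ := h
    suffices (ordinaryHypergeometricSeries 𝕜 a b c).radius = ⊤ from this ▸ le_top
    refine FormalMultilinearSeries.radius_eq_top_of_forall_image_add_eq_zero _ (k + 1) fun n => ?_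
    exact ordinaryHypergeometricSeries_eq_zero_of_neg_nat a b c (by tauto) (by lia)

lemma hasFPowerSeriesOnBall_ordinaryHypergeometric (c : 𝕜) :
    HasFPowerSeriesOnBall (₂F₁ a b c)
      (.ofScalars 𝕜 (ordinaryHypergeometricCoefficient a b c)) 0 1 :=
  have h := one_le_radius_ordinaryHypergeometricSeries a b c
  ((ordinaryHypergeometricSeries 𝕜 a b c).hasFPowerSeriesOnBall (one_pos.trans_le h)).mono
    one_pos h

lemma analyticAt_ordinaryHypergeometric (c : 𝕜) {x : 𝕜} (hx : ‖x‖ < 1) :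
    AnalyticAt 𝕜 (₂F₁ a b c) x :=
  (hasFPowerSeriesOnBall_ordinaryHypergeometric a b c).analyticAt_of_mem
    (mem_eball_zero_iff.2 (by simpa [enorm, ← NNReal.coe_lt_coe] using hx))

theorem hypergeometricOp_ordinaryHypergeometric (hc : ∀ m : ℕ, c ≠ -m) {x : 𝕜} (hx : ‖x‖ < 1) :
    hypergeometricOp a b c (₂F₁ a b c) x = 0 := by
  set F : 𝕜 → 𝕜 := ₂F₁ a b c
  set C := ordinaryHypergeometricCoefficient a b c
  have hF : HasFPowerSeriesOnBall F (.ofScalars 𝕜 C) 0 1 :=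
    hasFPowerSeriesOnBall_ordinaryHypergeometric a b c
  have hF' := hasFPowerSeriesOnBall_deriv_ofScalars hF
  have hx' : ‖x‖ₑ < 1 := by simpa [enorm, ← NNReal.coe_lt_coe] using hx
  have sum_xF'' := hasSum_mul_deriv_ofScalars hF' hx'
  have sum_xxF'' : HasSum (fun n : ℕ => n * (n - 1) * C n * x ^ n)
      (x * (x * deriv (deriv F) x)) := by
    apply hasSum_mul_pow_of_hasSum_succ (c := fun n : ℕ => n * (n - 1) * C n) (by simp)
    convert sum_xF'' using 3
    push_cast
    ring
  have sum_left := sum_xF''.add ((hasSum_ofScalars hF' hx').mul_left c)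
  have sum_right := (sum_xxF''.add ((hasSum_mul_deriv_ofScalars hF hx').mul_left (a + b + 1))).add
    ((hasSum_ofScalars hF hx').mul_left (a * b))
  have euler_form : x * deriv (deriv F) x + c * deriv F x =
      x * (x * deriv (deriv F) x) + (a + b + 1) * (x * deriv F x) + a * b * F x := by
    refine sum_left.unique (sum_right.congr_fun fun n => ?_)
    linear_combination x ^ n * ordinaryHypergeometricCoefficient_succ a b hc n
  rw [hypergeometricOp, iteratedDeriv_succ, iteratedDeriv_one]
  linear_combination euler_form

end GaussHypergeometric

section OneSubCpow

variable {z : ℂ}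

lemma deriv_one_sub_cpow (w : ℂ) (hz : 1 - z ∈ slitPlane) :
    deriv (fun y : ℂ => (1 - y) ^ w) z = -(w * (1 - z) ^ (w - 1)) := by
  rw [deriv_comp_const_sub (fun y : ℂ => y ^ w), Complex.deriv_cpow_const hz]

lemma iteratedDeriv_two_one_sub_cpow (w : ℂ) (hz : 1 - z ∈ slitPlane) :
    iteratedDeriv 2 (fun y : ℂ => (1 - y) ^ w) z = w * (w - 1) * (1 - z) ^ (w - 2) := by
  have hderiv : deriv (fun y : ℂ => y ^ w) =ᶠ[𝓝 (1 - z)] fun y => w * y ^ (w - 1) := by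
    filter_upwards [isOpen_slitPlane.mem_nhds hz] with y hy using Complex.deriv_cpow_const hy
  rw [iteratedDeriv_comp_const_sub 2 (fun y : ℂ => y ^ w)]
  beta_reduce
  rw [iteratedDeriv_succ, iteratedDeriv_one,
    hderiv.deriv_eq, deriv_const_mul_field, Complex.deriv_cpow_const hz]
  ring_nf

lemma deriv_one_sub_cpow_mul (w : ℂ) {g : ℂ → ℂ} (hz : 1 - z ∈ slitPlane)
    (hg : DifferentiableAt ℂ g z) :
    deriv (fun y => (1 - y) ^ w * g y) z =
      (1 - z) ^ w * (deriv g z - w / (1 - z) * g z) := by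
  have hpow : DifferentiableAt ℂ (fun y : ℂ => (1 - y) ^ w) z := by fun_prop (disch := assumption)
  rw [deriv_fun_mul hpow hg, deriv_one_sub_cpow w hz, cpow_sub _ _ (slitPlane_ne_zero hz),
    cpow_one]
  ring

lemma iteratedDeriv_two_one_sub_cpow_mul (w : ℂ) {g : ℂ → ℂ} (hz : 1 - z ∈ slitPlane)
    (hg : AnalyticAt ℂ g z) :
    iteratedDeriv 2 (fun y => (1 - y) ^ w * g y) z =
      (1 - z) ^ w * (iteratedDeriv 2 g z - 2 * w / (1 - z) * deriv g z +
        w * (w - 1) / (1 - z) ^ 2 * g z) := by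
  have hpow : AnalyticAt ℂ (fun y : ℂ => (1 - y) ^ w) z := by fun_prop (disch := assumption)
  have hz0 : 1 - z ≠ 0 := slitPlane_ne_zero hz
  rw [iteratedDeriv_fun_mul hpow.contDiffAt hg.contDiffAt]
  simp only [Finset.sum_range_succ, Finset.sum_range_zero, Nat.choose_zero_right, Nat.choose_self,
    Nat.choose_succ_self_right, Nat.reduceAdd, Nat.reduceSub, Nat.cast_one, Nat.cast_ofNat,
    iteratedDeriv_zero, iteratedDeriv_one, iteratedDeriv_two_one_sub_cpow w hz,
    deriv_one_sub_cpow w hz, cpow_sub _ _ hz0, cpow_one, cpow_ofNat]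
  ring

end OneSubCpow

section InvOneSub

variable {𝕜 : Type*} [NontriviallyNormedField 𝕜] {f : 𝕜 → 𝕜} {z : 𝕜}

lemma analyticAt_comp_inv_one_sub (hz : z ≠ 1) (hf : AnalyticAt 𝕜 f (1 - z)⁻¹) :
    AnalyticAt 𝕜 (fun y => f (1 - y)⁻¹) z :=
  hf.comp (f := fun y : 𝕜 => (1 - y)⁻¹)
    ((analyticAt_const.sub analyticAt_id).fun_inv (sub_ne_zero.2 hz.symm))

lemma deriv_comp_inv_one_sub (hz : z ≠ 1) (hf : DifferentiableAt 𝕜 f (1 - z)⁻¹) :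
    deriv (fun y => f (1 - y)⁻¹) z = deriv f (1 - z)⁻¹ / (1 - z) ^ 2 := by
  have hinv : HasDerivAt (fun y : 𝕜 => (1 - y)⁻¹) (1 / (1 - z) ^ 2) z := by
    simpa using ((hasDerivAt_id z).const_sub 1).fun_inv (sub_ne_zero.2 hz.symm)
  exact (hf.hasDerivAt.comp z hinv).deriv.trans (mul_one_div _ _)

lemma iteratedDeriv_two_comp_inv_one_sub (hz : z ≠ 1) (hf : ContDiffAt 𝕜 2 f (1 - z)⁻¹) :
    iteratedDeriv 2 (fun y => f (1 - y)⁻¹) z =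
      iteratedDeriv 2 f (1 - z)⁻¹ / (1 - z) ^ 4 + 2 * deriv f (1 - z)⁻¹ / (1 - z) ^ 3 := by
  have hz0 : 1 - z ≠ 0 := sub_ne_zero.2 hz.symm
  have hinv : ContDiffAt 𝕜 2 (fun y : 𝕜 => (1 - y)⁻¹) z := by fun_prop (disch := assumption)
  have hderiv : deriv (fun y : 𝕜 => (1 - y)⁻¹) z = 1 / (1 - z) ^ 2 := by
    simpa using deriv_comp_inv_one_sub (f := id) hz differentiableAt_id
  have hderiv₂ : iteratedDeriv 2 (fun y : 𝕜 => (1 - y)⁻¹) z = 2 / (1 - z) ^ 3 := by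
    rw [iteratedDeriv_comp_const_sub 2 (Inv.inv : 𝕜 → 𝕜)]
    simp only [iteratedDeriv_eq_iterate, iter_deriv_inv]
    norm_num [zpow_neg, div_eq_mul_inv]
  have hchain := iteratedDeriv_comp_two (f := fun y : 𝕜 => (1 - y)⁻¹) hf hinv
  rw [hderiv, hderiv₂] at hchain
  exact hchain.trans (by field_simp)

end InvOneSub

/-- Kummer's change of variable `x = 1/(1 - z)`, which carries Gauss's equation with parameters
`(a, c - b, a - b + 1)` at `x = 0` to the one with parameters `(a, b, c)` at `z = ∞`. -/
theorem hypergeometricOp_one_sub_cpow_mul_comp_inv_one_sub (a b c : ℂ) {f : ℂ → ℂ} {z : ℂ}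
    (hz : 1 - z ∈ slitPlane) (hf : AnalyticAt ℂ f (1 - z)⁻¹) :
    hypergeometricOp a b c (fun y => (1 - y) ^ (-a) * f (1 - y)⁻¹) z =
      -((1 - z) ^ (-a) / (1 - z)) * hypergeometricOp a (c - b) (a - b + 1) f (1 - z)⁻¹ := by
  have hz0 : 1 - z ≠ 0 := slitPlane_ne_zero hz
  have hz1 : z ≠ 1 := fun h => hz0 (sub_eq_zero.2 h.symm)
  have hcomp := analyticAt_comp_inv_one_sub hz1 hf
  rw [hypergeometricOp, hypergeometricOp, iteratedDeriv_two_one_sub_cpow_mul _ hz hcomp,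
    deriv_one_sub_cpow_mul _ hz hcomp.differentiableAt,
    iteratedDeriv_two_comp_inv_one_sub hz1 hf.contDiffAt,
    deriv_comp_inv_one_sub hz1 hf.differentiableAt]
  generalize iteratedDeriv 2 f (1 - z)⁻¹ = f₂, deriv f (1 - z)⁻¹ = f₁, f (1 - z)⁻¹ = f₀
  field_simp
  ring

/-- The differential operator of the radial hypergeometric equation `E(ν, τ)`, in a complex
variable and with the dimension `ν` allowed to be complex. -/
noncomputable def radialHypergeometricOp (ν τ : ℂ) (w : ℂ → ℂ) (z : ℂ) : ℂ :=
  z * (1 - z) * iteratedDeriv 2 w z + (ν / 2 - ν * z) * deriv w z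
    - ((ν - 1) / 4 * (ν - 1 + 1 / (1 - z)) - τ) * w z

theorem radialHypergeometricOp_one_sub_cpow_half_mul (ν s : ℂ) {u : ℂ → ℂ} {z : ℂ}
    (hz : 1 - z ∈ slitPlane) (hu : AnalyticAt ℂ u z) :
    radialHypergeometricOp ν (s ^ 2) (fun y => (1 - y) ^ (1 / 2 : ℂ) * u y) z =
      (1 - z) ^ (1 / 2 : ℂ) * hypergeometricOp (ν / 2 + s) (ν / 2 - s) (ν / 2) u z := by
  have hz0 : 1 - z ≠ 0 := slitPlane_ne_zero hz
  rw [radialHypergeometricOp, hypergeometricOp, iteratedDeriv_two_one_sub_cpow_mul _ hz hu,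
    deriv_one_sub_cpow_mul _ hz hu.differentiableAt]
  field_simp
  ring

lemma radialHypergeometricOp_congr (ν τ : ℂ) {f g : ℂ → ℂ} {z : ℂ} (h : f =ᶠ[𝓝 z] g) :
    radialHypergeometricOp ν τ f z = radialHypergeometricOp ν τ g z := by
  simp only [radialHypergeometricOp, h.iteratedDeriv_eq 2, h.deriv_eq, h.eq_of_nhds]

lemma eqOn_deriv_of_eqOn_comp_ofReal {w : ℂ → ℂ} {h : ℝ → ℂ} {I : Set ℝ} (hI : IsOpen I)
    (hw : ∀ x ∈ I, DifferentiableAt ℂ w x) (hh : EqOn h (fun x => w x) I) :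
    EqOn (deriv h) (fun x => deriv w x) I := fun x hx =>
  (hh.eventuallyEq_of_mem (hI.mem_nhds hx)).deriv_eq.trans (hw x hx).hasDerivAt.comp_ofReal.deriv

lemma satisfiesRadialHGC_of_radialHypergeometricOp_eq_zero {n : ℕ} {τ : ℂ} {w : ℂ → ℂ}
    {h : ℝ → ℂ} {I : Set ℝ} (hI : IsOpen I)
    (hw : ∀ x ∈ I, AnalyticAt ℂ w x ∧ radialHypergeometricOp n τ w x = 0)
    (hh : EqOn h (fun x => w x) I) : SatisfiesRadialHGC n τ h I := by
  have hderiv : EqOn (deriv h) (fun x => deriv w x) I :=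
    eqOn_deriv_of_eqOn_comp_ofReal hI (fun x hx => (hw x hx).1.differentiableAt) hh
  have hderiv₂ : EqOn (deriv (deriv h)) (fun x => deriv (deriv w) x) I :=
    eqOn_deriv_of_eqOn_comp_ofReal hI (fun x hx => (hw x hx).1.deriv.differentiableAt) hderiv
  intro x hx
  rw [hh hx, hderiv hx, hderiv₂ hx]
  simpa only [radialHypergeometricOp, iteratedDeriv_succ, iteratedDeriv_zero] using (hw x hx).2

/-- The solution `h(z) = (1 − z)^{1/2 − ν/2 − s} ₂F₁(ν/2 + s, s; 1 + 2s; 1/(1 − z))` of `E(ν, s²)`,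
continued to complex `z` by the principal branch of the power. -/
noncomputable def greenSolution (ν s z : ℂ) : ℂ :=
  (1 - z) ^ (1 / 2 - ν / 2 - s) * ₂F₁ (ν / 2 + s) s (1 + 2 * s) (1 - z)⁻¹

lemma greenSolution_ofReal (ν s : ℂ) {x : ℝ} (hx : x < 1) :
    greenSolution ν s x = Complex.exp ((1 / 2 - ν / 2 - s) * (Real.log (1 - x) : ℂ)) *
      ₂F₁ (ν / 2 + s) s (1 + 2 * s) ((1 / (1 - x) : ℝ) : ℂ) := by
  have hx0 : 0 < 1 - x := sub_pos.2 hx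
  have hxC : (1 : ℂ) - x ≠ 0 := mod_cast hx0.ne'
  rw [greenSolution, cpow_def_of_ne_zero hxC, Complex.ofReal_log hx0.le, mul_comm (Complex.log _)]
  push_cast
  rw [one_div (1 - (x : ℂ))]

lemma greenSolution_eq_mul_mul (ν s : ℂ) {z : ℂ} (hz : 1 - z ≠ 0) :
    greenSolution ν s z = (1 - z) ^ (1 / 2 : ℂ) *
      ((1 - z) ^ (-(ν / 2 + s)) * ₂F₁ (ν / 2 + s) s (1 + 2 * s) (1 - z)⁻¹) := by
  rw [← mul_assoc, ← cpow_add _ _ hz, greenSolution, sub_sub, ← sub_eq_add_neg]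

theorem green_solution_negative_curvature_general (ν s : ℂ) (hs : ∀ m : ℕ, 1 + 2 * s ≠ -m) {z : ℂ}
    (hz : 1 - z ∈ slitPlane) (hz1 : 1 < ‖1 - z‖) :
    AnalyticAt ℂ (greenSolution ν s) z ∧
      radialHypergeometricOp ν (s ^ 2) (greenSolution ν s) z = 0 := by
  have hz0 : 1 - z ≠ 0 := slitPlane_ne_zero hz
  have hnorm : ‖(1 - z)⁻¹‖ < 1 := by rw [norm_inv]; exact inv_lt_one_of_one_lt₀ hz1
  have hF : AnalyticAt ℂ (₂F₁ (ν / 2 + s) s (1 + 2 * s)) (1 - z)⁻¹ :=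
    analyticAt_ordinaryHypergeometric _ _ _ hnorm
  have hcomp := analyticAt_comp_inv_one_sub (fun h => hz0 (sub_eq_zero.2 h.symm)) hF
  have hu : AnalyticAt ℂ
      (fun y => (1 - y) ^ (-(ν / 2 + s)) * ₂F₁ (ν / 2 + s) s (1 + 2 * s) (1 - y)⁻¹) z := by
    fun_prop (disch := assumption)
  have hfactor : greenSolution ν s =ᶠ[𝓝 z] fun y => (1 - y) ^ (1 / 2 : ℂ) *
      ((1 - y) ^ (-(ν / 2 + s)) * ₂F₁ (ν / 2 + s) s (1 + 2 * s) (1 - y)⁻¹) := by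
    filter_upwards [(continuous_sub_left (1 : ℂ)).continuousAt.eventually_ne hz0] with y hy
      using greenSolution_eq_mul_mul ν s hy
  refine ⟨AnalyticAt.congr (by fun_prop (disch := assumption)) hfactor.symm, ?_⟩
  have hb : ν / 2 - (ν / 2 - s) = s := by ring
  have hc : ν / 2 + s - (ν / 2 - s) + 1 = 1 + 2 * s := by ring
  rw [radialHypergeometricOp_congr _ _ hfactor,
    radialHypergeometricOp_one_sub_cpow_half_mul _ _ hz hu,
    hypergeometricOp_one_sub_cpow_mul_comp_inv_one_sub _ _ _ hz hF, hb, hc,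
    hypergeometricOp_ordinaryHypergeometric _ _ hs hnorm, mul_zero, mul_zero]

theorem green_solution_negative_curvature (n : ℕ) (hn : 2 ≤ n) (s : ℂ)
    (hs : ∀ m : ℕ, (1 : ℂ) + 2 * s ≠ -(m : ℂ))
    (h : ℝ → ℂ)
    (hh : ∀ z : ℝ, h z = Complex.exp (((1 : ℂ) / 2 - (n : ℂ) / 2 - s) *
        (Real.log (1 - z) : ℂ)) *
      ₂F₁ ((n : ℂ) / 2 + s) s (1 + 2 * s) (((1 / (1 - z) : ℝ)) : ℂ)) :
    SatisfiesRadialHGC n (s ^ 2) h (Iio 0) := by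
  refine satisfiesRadialHGC_of_radialHypergeometricOp_eq_zero (w := greenSolution n s) isOpen_Iio
    (fun x (hx : x < 0) => ?_)
    fun x (hx : x < 0) => (hh x).trans (greenSolution_ofReal n s (hx.trans one_pos)).symm
  have hx1 : 1 < 1 - x := by linarith
  have hcast : (1 : ℂ) - x = ((1 - x : ℝ) : ℂ) := mod_cast rfl
  refine green_solution_negative_curvature_general n s hs ?_ ?_
  · exact hcast ▸ ofReal_mem_slitPlane.2 (one_pos.trans hx1)
  · rwa [hcast, Complex.norm_of_nonneg (one_pos.trans hx1).le]
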